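/- arXiv:2008.02455 — 3 statements merged into one kernel-verified Lean document; each statement's English description precedes it below -/
import Mathlib

section
/- Suppose w* = sup_x w(x) < ∞ and there exists x* ∈ ℝ^d with w(x*) = w*. Then for every n ≥ 1, the n-step IMH kernel started at x* satisfies, as an identity of probability measures, P^n(x*, ·) = (1 − 1/w*)^n · δ_{x*} + (1 − (1 − 1/w*)^n) · π, where δ_{x*} is the point mass at x*; consequently ‖P^n(x*,·) − π‖_TV = (1 − 1/w*)^n. -/
/-!
At a maximiser `x*` of the weight `w = π / p` every proposal `y` is accepted with probability
`w(y) / w*`, so the accepted moves have density `p w / w* = π / w*`: one step from `x*` is the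
mixture of `δ_{x*}` and `π` with weights `1 - 1/w*` and `1/w*`. The kernel is reversible, hence
leaves `π` invariant, and the mixture form propagates to all steps. Passing to the mixture scales
the distance of `δ_{x*}` from `π`, which is `1 - π {x*}`, by the factor `(1 - 1/w*)ⁿ`.
-/

open MeasureTheory

/-- Total variation distance between two measures. -/
noncomputable def tvDist {X : Type*} [MeasurableSpace X] (μ ν : Measure X) : ℝ :=
  ⨆ A : {s : Set X // MeasurableSet s}, |(μ A.1).toReal - (ν A.1).toReal|

/-- `n`-step kernel (n-fold composition) of a Markov kernel. -/
noncomputable def kiter {X : Type*} [MeasurableSpace X] (P : X → Measure X) : ℕ → X → Measure X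
  | 0, x => Measure.dirac x
  | (n + 1), x => (kiter P n x).bind P

/-- Weight function `w = π / p`. -/
noncomputable def imhW {X : Type*} (tgt prp : X → ℝ) (x : X) : ℝ := tgt x / prp x

/-- Rejection probability of the IMH chain at `x`. -/
noncomputable def imhR {X : Type*} [MeasureSpace X] (tgt prp : X → ℝ) (x : X) : ℝ :=
  ∫ y, (1 - min (imhW tgt prp y / imhW tgt prp x) 1) * prp y

/-- The IMH transition kernel. -/
noncomputable def imhP {X : Type*} [MeasureSpace X] (tgt prp : X → ℝ) (x : X) : Measure X :=
  (volume : Measure X).withDensity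
      (fun y => ENNReal.ofReal (prp y * min (imhW tgt prp y / imhW tgt prp x) 1))
    + ENNReal.ofReal (imhR tgt prp x) • Measure.dirac x

/-- The measure with density `f` with respect to Lebesgue measure. -/
noncomputable def densityMeasure {X : Type*} [MeasureSpace X] (f : X → ℝ) : Measure X :=
  (volume : Measure X).withDensity fun y => ENNReal.ofReal (f y)

/-- Worst-case total variation distance from stationarity after `n` steps of the IMH chain. -/
noncomputable def dIMH {X : Type*} [MeasureSpace X] (tgt prp : X → ℝ) (n : ℕ) : ℝ :=
  ⨆ x, tvDist (kiter (imhP tgt prp) n x) (densityMeasure tgt)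

open ProbabilityTheory
open scoped ENNReal

section TotalVariation

variable {X : Type*} [MeasurableSpace X] {μ ν : Measure X}

lemma tvDist_mixture_right [IsFiniteMeasure μ] [IsFiniteMeasure ν] {c : ℝ} (hc₀ : 0 ≤ c)
    (hc₁ : c ≤ 1) :
    tvDist (ENNReal.ofReal c • μ + ENNReal.ofReal (1 - c) • ν) ν = c * tvDist μ ν := by
  simp only [tvDist, ← measureReal_def]
  rw [Real.mul_iSup_of_nonneg hc₀]
  have := μ.smul_finite (c := ENNReal.ofReal c) ENNReal.ofReal_ne_top
  have := ν.smul_finite (c := ENNReal.ofReal (1 - c)) ENNReal.ofReal_ne_top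
  congr with A
  calc |(ENNReal.ofReal c • μ + ENNReal.ofReal (1 - c) • ν).real A - ν.real A|
      = |c * (μ.real A - ν.real A)| := by
        rw [measureReal_add_apply, measureReal_ennreal_smul_apply, measureReal_ennreal_smul_apply,
          ENNReal.toReal_ofReal hc₀, ENNReal.toReal_ofReal (sub_nonneg.2 hc₁)]
        ring_nf
    _ = c * |μ.real A - ν.real A| := by rw [abs_mul, abs_of_nonneg hc₀]

lemma tvDist_dirac_left [MeasurableSingletonClass X] [IsProbabilityMeasure ν] (x : X) :
    tvDist (Measure.dirac x) ν = 1 - ν.real {x} := by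
  have hle_one : ∀ A : Set X, ν.real A ≤ 1 := fun A => measureReal_le_one
  refine IsGreatest.csSup_eq ⟨⟨⟨{x}, measurableSet_singleton x⟩, ?_⟩, ?_⟩
  · simp [← measureReal_def, hle_one {x}]
  rintro _ ⟨⟨A, hA⟩, rfl⟩
  by_cases hx : x ∈ A
  · have hsub : ν.real {x} ≤ ν.real A := measureReal_mono (Set.singleton_subset_iff.2 hx)
    simpa [← measureReal_def, hx, abs_of_nonneg, hle_one A] using sub_le_sub_left hsub 1
  · have hsub : ν.real A ≤ ν.real {x}ᶜ := measureReal_mono fun y hy hyx => hx (hyx ▸ hy)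
    rw [probReal_compl_eq_one_sub (measurableSet_singleton x)] at hsub
    simpa [← measureReal_def, hA, hx, abs_of_nonneg] using hsub

end TotalVariation

section Kernel

variable {X : Type*} [MeasurableSpace X] {κ η : Kernel X X} {π : Measure X}

lemma isReversible_add (hκ : κ.IsReversible π) (hη : η.IsReversible π) :
    (κ + η).IsReversible π := by
  intro A B hA hB
  simp only [add_apply, Measure.add_apply]
  rw [lintegral_add_left (κ.measurable_coe hB), lintegral_add_left (κ.measurable_coe hA),
    hκ hA hB, hη hA hB]

lemma isReversible_withDensity_id {r : X → X → ℝ≥0∞} (hr : Measurable (Function.uncurry r)) :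
    (Kernel.id.withDensity r).IsReversible π := by
  have hflow : ∀ {A B : Set X}, MeasurableSet B →
      ∫⁻ x in A, Kernel.id.withDensity r x B ∂π = ∫⁻ x in A ∩ B, r x x ∂π := by
    intro A B hB
    rw [Set.inter_comm, ← Measure.restrict_restrict hB, ← lintegral_indicator hB]
    refine lintegral_congr fun x => ?_
    rw [Kernel.withDensity_apply' _ hr, Kernel.id_apply, ← lintegral_indicator hB,
      lintegral_dirac' _ (hr.of_uncurry_left.indicator hB)]
    rfl
  intro A B hA hB
  rw [hflow hB, hflow hA, Set.inter_comm]

lemma isReversible_withDensity_const {μ : Measure X} [SFinite μ] {p : X → ℝ≥0∞}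
    {q : X → X → ℝ≥0∞} (hp : Measurable p) (hq : Measurable (Function.uncurry q))
    (hbalance : ∀ x y, p x * q x y = p y * q y x) :
    ((Kernel.const X μ).withDensity q).IsReversible (μ.withDensity p) := by
  have hflow : ∀ {A B : Set X}, MeasurableSet A → MeasurableSet B →
      ∫⁻ x in A, (Kernel.const X μ).withDensity q x B ∂μ.withDensity p
        = ∫⁻ x in A, ∫⁻ y in B, p x * q x y ∂μ ∂μ := by
    intro A B hA hB
    rw [setLIntegral_withDensity_eq_setLIntegral_mul _ hp (Kernel.measurable_coe _ hB) hA]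
    refine lintegral_congr fun x => ?_
    rw [Pi.mul_apply, Kernel.withDensity_apply' _ hq, Kernel.const_apply,
      lintegral_const_mul _ hq.of_uncurry_left]
  intro A B hA hB
  rw [hflow hA hB, hflow hB hA,
    lintegral_lintegral_swap ((hp.comp measurable_fst).mul hq).aemeasurable]
  simp only [hbalance]

lemma kiter_eq_mixture {x : X} {r : ℝ} (hr₀ : 0 ≤ r) (hr₁ : r ≤ 1) (hκ : κ.Invariant π)
    (hx : κ x = ENNReal.ofReal r • Measure.dirac x + ENNReal.ofReal (1 - r) • π) (n : ℕ) :
    kiter κ n x = ENNReal.ofReal (r ^ n) • Measure.dirac x + ENNReal.ofReal (1 - r ^ n) • π := by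
  induction n with
  | zero => simp [kiter]
  | succ n ih =>
    have hrn₀ : 0 ≤ r ^ n := pow_nonneg hr₀ n
    have hrn₁ : r ^ n ≤ 1 := pow_le_one₀ hr₀ hr₁
    have hweight : ENNReal.ofReal (r ^ n) * ENNReal.ofReal (1 - r) + ENNReal.ofReal (1 - r ^ n)
        = ENNReal.ofReal (1 - r ^ (n + 1)) := by
      rw [← ENNReal.ofReal_mul hrn₀, ← ENNReal.ofReal_add
        (mul_nonneg hrn₀ (sub_nonneg.2 hr₁)) (sub_nonneg.2 hrn₁)]
      ring_nf
    calc kiter κ (n + 1) x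
        = ENNReal.ofReal (r ^ n) • κ x + ENNReal.ofReal (1 - r ^ n) • π := by
          rw [kiter, ih, Measure.comp_add, Measure.comp_smul, Measure.comp_smul,
            Measure.dirac_bind κ.measurable, hκ.def]
      _ = ENNReal.ofReal (r ^ (n + 1)) • Measure.dirac x
            + ENNReal.ofReal (1 - r ^ (n + 1)) • π := by
          rw [hx, smul_add, smul_smul, smul_smul, add_assoc, ← add_smul, hweight,
            ← ENNReal.ofReal_mul hrn₀, ← pow_succ]

end Kernel

section Density

variable {X : Type*} [MeasureSpace X]

lemma isProbabilityMeasure_densityMeasure {f : X → ℝ} (hf : ∀ x, 0 ≤ f x)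
    (hint : ∫ x, f x = 1) : IsProbabilityMeasure (densityMeasure f) := by
  constructor
  rw [densityMeasure, withDensity_apply _ .univ, Measure.restrict_univ,
    ← ofReal_integral_eq_lintegral_ofReal (.of_integral_ne_zero (by simp [hint]))
    (ae_of_all _ hf), hint, ENNReal.ofReal_one]

lemma densityMeasure_const_mul {f : X → ℝ} (hf : Measurable f) {c : ℝ} (hc : 0 ≤ c) :
    densityMeasure (fun x => c * f x) = ENNReal.ofReal c • densityMeasure f := by
  simp only [densityMeasure, ENNReal.ofReal_mul hc]
  exact withDensity_smul _ hf.ennreal_ofReal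

lemma densityMeasure_real_singleton [NullSingletonClass (volume : Measure X)] (f : X → ℝ) (x : X) :
    (densityMeasure f).real {x} = 0 := by
  rw [measureReal_def, densityMeasure,
    withDensity_absolutelyContinuous _ _ (measure_singleton x), ENNReal.toReal_zero]

end Density

section Acceptance

variable {X : Type*} {tgt prp : X → ℝ} {x : X}

/-- The probability of accepting a proposed move from `x` to `y` in the IMH chain. As division by
zero gives `0`, it vanishes when `imhW tgt prp x = 0`. -/
noncomputable def imhAcc (tgt prp : X → ℝ) (x y : X) : ℝ :=
  min (imhW tgt prp y / imhW tgt prp x) 1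

lemma imhW_nonneg (htgt : ∀ x, 0 ≤ tgt x) (hprp : ∀ x, 0 ≤ prp x) (x : X) :
    0 ≤ imhW tgt prp x :=
  div_nonneg (htgt x) (hprp x)

lemma mul_imhW (hx : prp x ≠ 0) : prp x * imhW tgt prp x = tgt x :=
  mul_div_cancel₀ _ hx

lemma imhAcc_nonneg (htgt : ∀ x, 0 ≤ tgt x) (hprp : ∀ x, 0 ≤ prp x) (x y : X) :
    0 ≤ imhAcc tgt prp x y :=
  le_min (div_nonneg (imhW_nonneg htgt hprp y) (imhW_nonneg htgt hprp x)) zero_le_one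

lemma imhAcc_le_one (x y : X) : imhAcc tgt prp x y ≤ 1 :=
  min_le_right _ _

lemma imhW_mul_imhAcc (htgt : ∀ x, 0 ≤ tgt x) (hprp : ∀ x, 0 ≤ prp x) (x y : X) :
    imhW tgt prp x * imhAcc tgt prp x y = min (imhW tgt prp y) (imhW tgt prp x) := by
  obtain hx | hx := (imhW_nonneg htgt hprp x).eq_or_lt
  · rw [← hx, zero_mul, min_eq_right (imhW_nonneg htgt hprp y)]
  · rw [imhAcc, mul_min_of_nonneg _ _ hx.le, mul_div_cancel₀ _ hx.ne', mul_one]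

lemma imh_detailed_balance (htgt : ∀ x, 0 ≤ tgt x) (hprp : ∀ x, 0 < prp x) (x y : X) :
    tgt x * (prp y * imhAcc tgt prp x y) = tgt y * (prp x * imhAcc tgt prp y x) := by
  have hflow : ∀ x y, tgt x * (prp y * imhAcc tgt prp x y)
      = prp x * prp y * min (imhW tgt prp y) (imhW tgt prp x) := by
    intro x y
    rw [← imhW_mul_imhAcc htgt (fun z => (hprp z).le), ← mul_imhW (tgt := tgt) (hprp x).ne']
    ring
  rw [hflow, hflow, min_comm, mul_comm (prp x)]

lemma mul_imhAcc_of_forall_imhW_le (htgt : ∀ x, 0 ≤ tgt x) (hprp : ∀ x, 0 < prp x)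
    (hmax : ∀ y, imhW tgt prp y ≤ imhW tgt prp x) (y : X) :
    prp y * imhAcc tgt prp x y = 1 / imhW tgt prp x * tgt y := by
  rw [imhAcc, min_eq_left (div_le_one_of_le₀ (hmax y) (imhW_nonneg htgt (fun z => (hprp z).le) x)),
    ← mul_imhW (tgt := tgt) (hprp y).ne']
  ring

end Acceptance

section Rejection

variable {X : Type*} [MeasureSpace X] {tgt prp : X → ℝ} {x : X}

lemma measurable_imhW (htgt : Measurable tgt) (hprp : Measurable prp) :
    Measurable (imhW tgt prp) :=
  htgt.div hprp

lemma measurable_imhAcc (htgt : Measurable tgt) (hprp : Measurable prp) :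
    Measurable (Function.uncurry (imhAcc tgt prp)) :=
  have hw := measurable_imhW htgt hprp
  ((hw.comp measurable_snd).div (hw.comp measurable_fst)).min measurable_const

lemma measurable_ofReal_mul_imhAcc (htgt : Measurable tgt) (hprp : Measurable prp) :
    Measurable (Function.uncurry fun x y => ENNReal.ofReal (prp y * imhAcc tgt prp x y)) :=
  ((hprp.comp measurable_snd).mul (measurable_imhAcc htgt hprp)).ennreal_ofReal

lemma integrable_mul_imhAcc (htgt_meas : Measurable tgt) (hprp_meas : Measurable prp)
    (htgt : ∀ x, 0 ≤ tgt x) (hprp : ∀ x, 0 ≤ prp x) (hint : Integrable prp) (x : X) :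
    Integrable fun y => prp y * imhAcc tgt prp x y := by
  refine hint.mul_bdd (c := 1)
    (measurable_imhAcc htgt_meas hprp_meas).of_uncurry_left.aestronglyMeasurable
    (ae_of_all _ fun y => ?_)
  rw [Real.norm_of_nonneg (imhAcc_nonneg htgt hprp x y)]
  exact imhAcc_le_one x y

lemma imhR_nonneg (hprp : ∀ x, 0 ≤ prp x) (x : X) : 0 ≤ imhR tgt prp x :=
  integral_nonneg fun y => mul_nonneg (sub_nonneg.2 (imhAcc_le_one x y)) (hprp y)

lemma imhR_eq_one_sub_integral (htgt_meas : Measurable tgt) (hprp_meas : Measurable prp)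
    (htgt : ∀ x, 0 ≤ tgt x) (hprp : ∀ x, 0 ≤ prp x) (hprp_int : ∫ x, prp x = 1) (x : X) :
    imhR tgt prp x = 1 - ∫ y, prp y * imhAcc tgt prp x y := by
  have hint : Integrable prp := .of_integral_ne_zero (by simp [hprp_int])
  calc imhR tgt prp x = ∫ y, prp y - prp y * imhAcc tgt prp x y :=
        integral_congr_ae (ae_of_all _ fun y => by simp only [imhAcc]; ring)
    _ = 1 - ∫ y, prp y * imhAcc tgt prp x y := by
        rw [integral_sub hint (integrable_mul_imhAcc htgt_meas hprp_meas htgt hprp hint x),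
          hprp_int]

lemma imhR_of_forall_imhW_le (htgt_meas : Measurable tgt) (hprp_meas : Measurable prp)
    (htgt : ∀ x, 0 ≤ tgt x) (hprp : ∀ x, 0 < prp x) (htgt_int : ∫ x, tgt x = 1)
    (hprp_int : ∫ x, prp x = 1) (hmax : ∀ y, imhW tgt prp y ≤ imhW tgt prp x) :
    imhR tgt prp x = 1 - 1 / imhW tgt prp x := by
  rw [imhR_eq_one_sub_integral htgt_meas hprp_meas htgt (fun y => (hprp y).le) hprp_int]
  simp only [mul_imhAcc_of_forall_imhW_le htgt hprp hmax]
  rw [integral_const_mul, htgt_int, mul_one]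

end Rejection

section SingletonMass

variable {X : Type*} [MeasureSpace X] {tgt prp : X → ℝ}

lemma imhW_eq_one_of_subsingleton [Subsingleton X] (htgt_int : ∫ x, tgt x = 1)
    (hprp_int : ∫ x, prp x = 1) (x : X) : imhW tgt prp x = 1 := by
  have hintegral : ∀ f : X → ℝ, ∫ y, f y = (volume : Measure X).real Set.univ * f x := by
    intro f
    let : Unique X := uniqueOfSubsingleton x
    exact integral_unique f
  rw [hintegral] at htgt_int hprp_int
  rw [imhW, mul_left_cancel₀ (left_ne_zero_of_mul_eq_one hprp_int) (htgt_int.trans hprp_int.symm),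
    div_self (right_ne_zero_of_mul_eq_one hprp_int)]

/-- In dimension zero `π` is the point mass at `x`, but then the factor `1 - 1 / w` vanishes. -/
lemma pow_mul_one_sub_densityMeasure_singleton {ι : Type*} [Fintype ι] {tgt prp : (ι → ℝ) → ℝ}
    (htgt_int : ∫ x, tgt x = 1) (hprp_int : ∫ x, prp x = 1) (x : ι → ℝ) {n : ℕ}
    (hn : n ≠ 0) :
    (1 - 1 / imhW tgt prp x) ^ n * (1 - (densityMeasure tgt).real {x})
      = (1 - 1 / imhW tgt prp x) ^ n := by
  cases isEmpty_or_nonempty ι with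
  | inl _ => simp [imhW_eq_one_of_subsingleton htgt_int hprp_int, hn]
  | inr _ => rw [densityMeasure_real_singleton, sub_zero, mul_one]

end SingletonMass

section IMHKernel

variable {X : Type*} [MeasureSpace X] [SFinite (volume : Measure X)] {tgt prp : X → ℝ}

/-- The transition function `imhP` of the IMH chain as a kernel, built from measurable families of
densities so that Mathlib's theory of reversible kernels applies. It agrees with `imhP` when both
densities are measurable, see `coe_imhKernel`. -/
noncomputable def imhKernel (tgt prp : X → ℝ) : Kernel X X :=
  (Kernel.const X volume).withDensity (fun x y => ENNReal.ofReal (prp y * imhAcc tgt prp x y))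
    + Kernel.id.withDensity (fun x _ => ENNReal.ofReal (imhR tgt prp x))

lemma measurable_imhR (htgt : Measurable tgt) (hprp : Measurable prp) :
    Measurable (imhR tgt prp) :=
  (((measurable_imhAcc htgt hprp).const_sub 1).mul
    (hprp.comp measurable_snd)).stronglyMeasurable.integral_prod_right'.measurable

lemma measurable_uncurry_imhR (htgt : Measurable tgt) (hprp : Measurable prp) :
    Measurable (Function.uncurry fun (x _ : X) => ENNReal.ofReal (imhR tgt prp x)) :=
  ((measurable_imhR htgt hprp).comp measurable_fst).ennreal_ofReal

lemma coe_imhKernel (htgt : Measurable tgt) (hprp : Measurable prp) :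
    ⇑(imhKernel tgt prp) = imhP tgt prp := by
  ext1 x
  rw [imhKernel, add_apply,
    Kernel.withDensity_apply _ (measurable_ofReal_mul_imhAcc htgt hprp),
    Kernel.withDensity_apply _ (measurable_uncurry_imhR htgt hprp), Kernel.const_apply,
    Kernel.id_apply, withDensity_const]
  rfl

lemma isReversible_imhKernel (htgt_meas : Measurable tgt) (hprp_meas : Measurable prp)
    (htgt : ∀ x, 0 ≤ tgt x) (hprp : ∀ x, 0 < prp x) :
    (imhKernel tgt prp).IsReversible (densityMeasure tgt) := by
  refine isReversible_add (isReversible_withDensity_const htgt_meas.ennreal_ofReal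
    (measurable_ofReal_mul_imhAcc htgt_meas hprp_meas) fun x y => ?_)
    (isReversible_withDensity_id (measurable_uncurry_imhR htgt_meas hprp_meas))
  rw [← ENNReal.ofReal_mul (htgt x), ← ENNReal.ofReal_mul (htgt y),
    imh_detailed_balance htgt hprp]

lemma isMarkovKernel_imhKernel (htgt_meas : Measurable tgt) (hprp_meas : Measurable prp)
    (htgt : ∀ x, 0 ≤ tgt x) (hprp : ∀ x, 0 ≤ prp x) (hprp_int : ∫ x, prp x = 1) :
    IsMarkovKernel (imhKernel tgt prp) := by
  refine ⟨fun x => ⟨?_⟩⟩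
  have hnonneg : ∀ y, 0 ≤ prp y * imhAcc tgt prp x y := fun y =>
    mul_nonneg (hprp y) (imhAcc_nonneg htgt hprp x y)
  have hint : Integrable fun y => prp y * imhAcc tgt prp x y :=
    integrable_mul_imhAcc htgt_meas hprp_meas htgt hprp
      (.of_integral_ne_zero (by simp [hprp_int])) x
  calc imhKernel tgt prp x Set.univ
      = (∫⁻ y, ENNReal.ofReal (prp y * imhAcc tgt prp x y)) + ENNReal.ofReal (imhR tgt prp x) := by
        rw [coe_imhKernel htgt_meas hprp_meas]
        simp [imhP, imhAcc]
    _ = ENNReal.ofReal ((∫ y, prp y * imhAcc tgt prp x y) + imhR tgt prp x) := by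
        rw [← ofReal_integral_eq_lintegral_ofReal hint (ae_of_all _ hnonneg),
          ← ENNReal.ofReal_add (integral_nonneg hnonneg) (imhR_nonneg hprp x)]
    _ = 1 := by
        rw [imhR_eq_one_sub_integral htgt_meas hprp_meas htgt hprp hprp_int, add_sub_cancel,
          ENNReal.ofReal_one]

lemma imhKernel_invariant (htgt_meas : Measurable tgt) (hprp_meas : Measurable prp)
    (htgt : ∀ x, 0 ≤ tgt x) (hprp : ∀ x, 0 < prp x) (hprp_int : ∫ x, prp x = 1) :
    (imhKernel tgt prp).Invariant (densityMeasure tgt) :=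
  have := isMarkovKernel_imhKernel htgt_meas hprp_meas htgt (fun x => (hprp x).le) hprp_int
  (isReversible_imhKernel htgt_meas hprp_meas htgt hprp).invariant

end IMHKernel

section AtMaximum

variable {X : Type*} [MeasureSpace X] {tgt prp : X → ℝ} {x : X}

lemma imhP_of_forall_imhW_le (htgt_meas : Measurable tgt) (hprp_meas : Measurable prp)
    (htgt : ∀ x, 0 ≤ tgt x) (hprp : ∀ x, 0 < prp x) (htgt_int : ∫ x, tgt x = 1)
    (hprp_int : ∫ x, prp x = 1) (hmax : ∀ y, imhW tgt prp y ≤ imhW tgt prp x) :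
    imhP tgt prp x = ENNReal.ofReal (1 - 1 / imhW tgt prp x) • Measure.dirac x
      + ENNReal.ofReal (1 / imhW tgt prp x) • densityMeasure tgt := by
  have haccepted : densityMeasure (fun y => prp y * imhAcc tgt prp x y)
      = ENNReal.ofReal (1 / imhW tgt prp x) • densityMeasure tgt := by
    simp only [mul_imhAcc_of_forall_imhW_le htgt hprp hmax]
    exact densityMeasure_const_mul htgt_meas
      (one_div_nonneg.2 (imhW_nonneg htgt (fun y => (hprp y).le) x))
  rw [← haccepted, ← imhR_of_forall_imhW_le htgt_meas hprp_meas htgt hprp htgt_int hprp_int hmax,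
    add_comm]
  rfl

theorem imh_exact_mixture_at_max_general [SFinite (volume : Measure X)]
    [MeasurableSingletonClass X] (htgt_meas : Measurable tgt) (hprp_meas : Measurable prp)
    (htgt : ∀ x, 0 ≤ tgt x) (hprp : ∀ x, 0 < prp x) (htgt_int : ∫ x, tgt x = 1)
    (hprp_int : ∫ x, prp x = 1) (hmax : ∀ y, imhW tgt prp y ≤ imhW tgt prp x) (n : ℕ) :
    kiter (imhP tgt prp) n x =
        ENNReal.ofReal ((1 - 1 / imhW tgt prp x) ^ n) • Measure.dirac x
          + ENNReal.ofReal (1 - (1 - 1 / imhW tgt prp x) ^ n) • densityMeasure tgt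
      ∧ tvDist (kiter (imhP tgt prp) n x) (densityMeasure tgt)
        = (1 - 1 / imhW tgt prp x) ^ n * (1 - (densityMeasure tgt).real {x}) := by
  have hprp₀ : ∀ y, 0 ≤ prp y := fun y => (hprp y).le
  have hr₀ : 0 ≤ 1 - 1 / imhW tgt prp x :=
    imhR_of_forall_imhW_le htgt_meas hprp_meas htgt hprp htgt_int hprp_int hmax ▸
      imhR_nonneg hprp₀ x
  have hr₁ : 1 - 1 / imhW tgt prp x ≤ 1 :=
    sub_le_self _ (one_div_nonneg.2 (imhW_nonneg htgt hprp₀ x))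
  have hstep := imhP_of_forall_imhW_le htgt_meas hprp_meas htgt hprp htgt_int hprp_int hmax
  have hmixture := kiter_eq_mixture hr₀ hr₁
    (imhKernel_invariant htgt_meas hprp_meas htgt hprp hprp_int)
    (by rw [coe_imhKernel htgt_meas hprp_meas, sub_sub_cancel, hstep]) n
  rw [coe_imhKernel htgt_meas hprp_meas] at hmixture
  have := isProbabilityMeasure_densityMeasure htgt htgt_int
  refine ⟨hmixture, ?_⟩
  rw [hmixture, tvDist_mixture_right (pow_nonneg hr₀ n) (pow_le_one₀ hr₀ hr₁), tvDist_dirac_left]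

end AtMaximum

/-- if `w* = sup w < ∞` is attained at `x*`, then for every `n ≥ 1`,
`Pⁿ(x*,·) = (1 − 1/w*)ⁿ·δ_{x*} + (1 − (1 − 1/w*)ⁿ)·π` as probability measures;
consequently `‖Pⁿ(x*,·) − π‖_TV = (1 − 1/w*)ⁿ`. -/
theorem imh_exact_mixture_at_max (d : ℕ) (tgt prp : (Fin d → ℝ) → ℝ)
    (htgt_cont : Continuous tgt) (hprp_cont : Continuous prp)
    (htgt_nonneg : ∀ x, 0 ≤ tgt x) (hprp_pos : ∀ x, 0 < prp x)
    (htgt_int : (∫ x, tgt x) = 1) (hprp_int : (∫ x, prp x) = 1)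
    (hbdd : BddAbove (Set.range (imhW tgt prp)))
    (wstar : ℝ) (hwstar : wstar = ⨆ x, imhW tgt prp x)
    (xstar : Fin d → ℝ) (hattain : imhW tgt prp xstar = wstar) :
    ∀ n : ℕ, 1 ≤ n →
      kiter (imhP tgt prp) n xstar =
        ENNReal.ofReal ((1 - 1 / wstar) ^ n) • Measure.dirac xstar
          + ENNReal.ofReal (1 - (1 - 1 / wstar) ^ n) • densityMeasure tgt
      ∧ tvDist (kiter (imhP tgt prp) n xstar) (densityMeasure tgt) = (1 - 1 / wstar) ^ n := by
  subst hattain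
  intro n hn
  have hmax : ∀ y, imhW tgt prp y ≤ imhW tgt prp xstar := fun y =>
    (le_ciSup hbdd y).trans_eq hwstar.symm
  exact (imh_exact_mixture_at_max_general htgt_cont.measurable hprp_cont.measurable htgt_nonneg
    hprp_pos htgt_int hprp_int hmax n).imp_right
      (·.trans (pow_mul_one_sub_densityMeasure_singleton htgt_int hprp_int xstar (by lia)))
end

section
/- Consider the Random Walk Metropolis–Hastings chain on ℝ with target density π equal to the uniform density on [−1,1] (π(x) = 1/2 for x ∈ [−1,1], 0 otherwise) and proposal Uniform[x−δ, x+δ], for a fixed constant δ with 1 ≤ δ < 2. Then: (1) for every x₀ ∈ [1−δ, δ−1] and every n ≥ 1, ‖P^n(x₀,·) − π‖_TV ≤ (1 − 1/δ)^n; (2) for every y₀ ∈ [−1,1] with |y₀| > δ−1 and every n ≥ 1, ‖P^n(y₀,·) − π‖_TV ≥ ((δ − 1 + |y₀|)/(2δ))^n. In particular, when δ > 1 different initializations have different convergence rates. -/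
open MeasureTheory

/-- Rejection probability of the RWMH chain with target density `tgt` and proposal
`Uniform[x − δ, x + δ]` (with the Lean convention `0/0 = 0`, so `min (0/0) 1 = 0`). -/
noncomputable def rwmhR (tgt : ℝ → ℝ) (δ : ℝ) (x : ℝ) : ℝ :=
  1 - (1 / (2 * δ)) * ∫ y in (x - δ)..(x + δ), min (tgt y / tgt x) 1

/-- Transition kernel of the RWMH chain with target density `tgt` and proposal
`Uniform[x − δ, x + δ]`:
`P(x, A) = (1/(2δ))·∫_{x−δ}^{x+δ} min(tgt(y)/tgt(x), 1)·1_A(y) dy + R(x)·1_A(x)`. -/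
noncomputable def rwmhP (tgt : ℝ → ℝ) (δ : ℝ) (x : ℝ) : Measure ℝ :=
  (volume : Measure ℝ).withDensity
      (fun y => ENNReal.ofReal
        ((1 / (2 * δ)) * (Set.Icc (x - δ) (x + δ)).indicator (fun z => min (tgt z / tgt x) 1) y))
    + ENNReal.ofReal (rwmhR tgt δ x) • Measure.dirac x

/-- The uniform density on `[−1, 1]`. -/
noncomputable def unifTgt : ℝ → ℝ := (Set.Icc (-1 : ℝ) 1).indicator fun _ => (1 / 2 : ℝ)

/-!
From a state `x` whose proposal window covers the support `S` of the target, one step of the chain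
is a mixture: with probability `|S| / (2δ)` the proposal falls in `S` and is accepted, which is an
exact draw from `π`, and otherwise the chain stays at `x`. As `π` is invariant, `n` steps miss `π`
only when every one of them was rejected, which bounds the distance by `(1 - |S| / (2δ)) ^ n`.

Conversely, after `n` rejections the chain still has an atom at its starting point. The target has
no atoms, so the mass of this atom bounds the distance from below. For `S = [m - h, m + h]` and a
start `y` near the boundary, part of the proposal window lies outside `S`, and the atom is heavier
than the bound for a central start.
-/

open ProbabilityTheory Metric
open scoped NNReal ENNReal

section TotalVariation

variable {X : Type*} [MeasurableSpace X] {μ ν : Measure X}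

lemma tvDist_le_of_forall_measurableSet {r : ℝ}
    (h : ∀ A, MeasurableSet A → |μ.real A - ν.real A| ≤ r) : tvDist μ ν ≤ r :=
  have : Nonempty {A : Set X // MeasurableSet A} := ⟨⟨∅, .empty⟩⟩
  ciSup_le fun A => h A A.2

lemma abs_measureReal_sub_le_tvDist [IsFiniteMeasure μ] [IsFiniteMeasure ν] {A : Set X}
    (hA : MeasurableSet A) : |μ.real A - ν.real A| ≤ tvDist μ ν := by
  refine le_ciSup (f := fun A : {A : Set X // MeasurableSet A} => |μ.real A.1 - ν.real A.1|)
    ⟨max (μ.real Set.univ) (ν.real Set.univ), ?_⟩ ⟨A, hA⟩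
  rintro _ ⟨A, rfl⟩
  have hμ : μ.real A ≤ μ.real Set.univ := measureReal_mono (Set.subset_univ _)
  have hν : ν.real A ≤ ν.real Set.univ := measureReal_mono (Set.subset_univ _)
  exact (abs_sub_le_of_le_of_le measureReal_nonneg (hμ.trans (le_max_left _ _))
    measureReal_nonneg (hν.trans (le_max_right _ _))).trans_eq (sub_zero _)

lemma tvDist_smul_add_smul_le [IsProbabilityMeasure μ] [IsProbabilityMeasure ν] {a b : ℝ≥0}
    (hab : a + b = 1) : tvDist (a • μ + b • ν) μ ≤ b := by
  refine tvDist_le_of_forall_measurableSet fun A _ => ?_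
  have hab' : (a : ℝ) + b = 1 := mod_cast hab
  calc |(a • μ + b • ν).real A - μ.real A|
      = b * |ν.real A - μ.real A| := by
        rw [measureReal_add_apply, measureReal_nnreal_smul_apply, measureReal_nnreal_smul_apply,
          ← abs_of_nonneg b.coe_nonneg, ← abs_mul, abs_of_nonneg b.coe_nonneg]
        congr 1
        linear_combination μ.real A * hab'
    _ ≤ b := mul_le_of_le_one_right b.coe_nonneg <|
        (abs_sub_le_of_le_of_le measureReal_nonneg measureReal_le_one
          measureReal_nonneg measureReal_le_one).trans_eq (sub_zero 1)

end TotalVariation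

section KernelPow

variable {X : Type*} [MeasurableSpace X] {κ : Kernel X X} {π : Measure X} {x : X}

lemma kernel_one_apply (x : X) : (1 : Kernel X X) x = Measure.dirac x :=
  Kernel.id_apply x

lemma kernel_pow_succ_apply (κ : Kernel X X) (n : ℕ) (x : X) :
    (κ ^ (n + 1)) x = ((κ ^ n) x).bind κ := by
  rw [pow_succ', ← Kernel.comp_apply]
  rfl

lemma kiter_eq_kernel_pow_apply (κ : Kernel X X) (n : ℕ) (x : X) : kiter κ n x = (κ ^ n) x := by
  induction n with
  | zero => rw [kiter, pow_zero, kernel_one_apply]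
  | succ n ih => rw [kiter, ih, kernel_pow_succ_apply]

instance isMarkovKernel_pow (κ : Kernel X X) [IsMarkovKernel κ] (n : ℕ) :
    IsMarkovKernel (κ ^ n) := by
  induction n with
  | zero => exact inferInstanceAs (IsMarkovKernel Kernel.id)
  | succ n ih =>
    rw [pow_succ']
    exact Kernel.IsMarkovKernel.comp κ (κ ^ n)

lemma kernel_pow_apply_eq_smul_add_smul_dirac (hπ : κ.Invariant π) {a b : ℝ≥0} (hab : a + b = 1)
    (hx : κ x = a • π + b • Measure.dirac x) (n : ℕ) :
    (κ ^ n) x = (1 - b ^ n) • π + b ^ n • Measure.dirac x := by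
  induction n with
  | zero => simp [kernel_one_apply]
  | succ n ih =>
    have hb : b ^ n ≤ 1 := pow_le_one₀ zero_le (hab ▸ le_add_self)
    have hcoef : 1 - b ^ n + b ^ n * a = 1 - b ^ (n + 1) := by
      refine eq_tsub_of_add_eq ?_
      rw [pow_succ, add_assoc, ← mul_add, hab, mul_one, tsub_add_cancel_of_le hb]
    calc (κ ^ (n + 1)) x
        = ((κ ^ n) x).bind κ := kernel_pow_succ_apply κ n x
      _ = (1 - b ^ n) • π + b ^ n • κ x := by
        rw [ih, Measure.comp_add, Measure.bind_smul, Measure.bind_smul, hπ.def,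
          Measure.dirac_bind κ.measurable]
      _ = (1 - b ^ (n + 1)) • π + b ^ (n + 1) • Measure.dirac x := by
        rw [hx, smul_add, smul_smul, smul_smul, ← add_assoc, ← add_smul, hcoef, pow_succ]

lemma tvDist_kernel_pow_apply_le [IsProbabilityMeasure π] (hπ : κ.Invariant π) {a b : ℝ≥0}
    (hab : a + b = 1) (hx : κ x = a • π + b • Measure.dirac x) (n : ℕ) :
    tvDist ((κ ^ n) x) π ≤ b ^ n := by
  rw [kernel_pow_apply_eq_smul_add_smul_dirac hπ hab hx, ← NNReal.coe_pow]
  exact tvDist_smul_add_smul_le <|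
    tsub_add_cancel_of_le (pow_le_one₀ zero_le (hab ▸ le_add_self))

variable [MeasurableSingletonClass X]

lemma singleton_pow_le_kernel_pow_apply_singleton (κ : Kernel X X) (x : X) (n : ℕ) :
    κ x {x} ^ n ≤ (κ ^ n) x {x} := by
  induction n with
  | zero => simp [kernel_one_apply]
  | succ n ih =>
    calc κ x {x} ^ (n + 1) = κ x {x} * κ x {x} ^ n := pow_succ' _ _
      _ ≤ κ x {x} * (κ ^ n) x {x} := by gcongr
      _ = ∫⁻ y in {x}, κ y {x} ∂(κ ^ n) x :=
        (lintegral_singleton (fun y => κ y {x}) x).symm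
      _ ≤ ∫⁻ y, κ y {x} ∂(κ ^ n) x := setLIntegral_le_lintegral _ _
      _ = (κ ^ (n + 1)) x {x} :=
        (Kernel.pow_succ_apply_eq_lintegral κ n x (measurableSet_singleton x)).symm

lemma singleton_pow_le_tvDist_kernel_pow_apply [IsMarkovKernel κ] [IsFiniteMeasure π]
    [NullSingletonClass π] (x : X) (n : ℕ) : (κ x).real {x} ^ n ≤ tvDist ((κ ^ n) x) π :=
  calc (κ x).real {x} ^ n ≤ ((κ ^ n) x).real {x} := by
        rw [measureReal_def, ← ENNReal.toReal_pow]
        exact ENNReal.toReal_mono (measure_ne_top _ _)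
          (singleton_pow_le_kernel_pow_apply_singleton κ x n)
    _ ≤ |((κ ^ n) x).real {x} - π.real {x}| := by simp [measureReal_def]
    _ ≤ tvDist ((κ ^ n) x) π := abs_measureReal_sub_le_tvDist (measurableSet_singleton x)

end KernelPow

lemma isReversible_withDensity_of_detailedBalance {X : Type*} [MeasurableSpace X]
    {κ : Kernel X X} {μ : Measure X} [SFinite μ] {p r : X → ℝ≥0∞} {k : X → X → ℝ≥0∞}
    (hp : Measurable p) (hk : Measurable (Function.uncurry k))
    (hκ : ∀ x, κ x = μ.withDensity (k x) + r x • Measure.dirac x)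
    (hbal : ∀ x y, p x * k x y = p y * k y x) : κ.IsReversible (μ.withDensity p) := by
  have hflow : ∀ A B, MeasurableSet A → MeasurableSet B →
      ∫⁻ x in A, κ x B ∂(μ.withDensity p)
        = (∫⁻ x in A, ∫⁻ y in B, p x * k x y ∂μ ∂μ) + ∫⁻ x in A ∩ B, p x * r x ∂μ := by
    intro A B hA hB
    have hdensity : ∀ x, p x * κ x B
        = (∫⁻ y in B, p x * k x y ∂μ) + B.indicator (fun x => p x * r x) x := by
      intro x
      rw [lintegral_const_mul _ hk.of_uncurry_left, hκ, Measure.add_apply, withDensity_apply _ hB,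
        Measure.smul_apply, Measure.dirac_apply' _ hB, mul_add]
      by_cases hx : x ∈ B <;> simp [hx]
    have hmeas : Measurable fun x => ∫⁻ y in B, p x * k x y ∂μ :=
      ((hp.comp measurable_fst).mul hk).lintegral_prod_right
    rw [setLIntegral_withDensity_eq_setLIntegral_mul _ hp (κ.measurable_coe hB) hA]
    simp only [Pi.mul_apply, hdensity]
    rw [lintegral_add_left hmeas, setLIntegral_indicator hB, Set.inter_comm]
  intro A B hA hB
  rw [hflow A B hA hB, hflow B A hB hA, Set.inter_comm,
    lintegral_lintegral_swap ((hp.comp measurable_fst).mul hk).aemeasurable]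
  simp only [hbal]

section RandomWalkMetropolis

variable {tgt : ℝ → ℝ} {δ : ℝ}

/-- The absolutely continuous part of the random walk Metropolis–Hastings kernel, as a function of
the current state `x` and the accepted proposal `y`. -/
noncomputable def rwmhDensity (tgt : ℝ → ℝ) (δ x y : ℝ) : ℝ :=
  1 / (2 * δ) * (Set.Icc (x - δ) (x + δ)).indicator (fun z => min (tgt z / tgt x) 1) y

lemma measurable_uncurry_rwmhDensity (ht : Measurable tgt) (δ : ℝ) :
    Measurable (Function.uncurry (rwmhDensity tgt δ)) := by
  have hwindow : MeasurableSet {q : ℝ × ℝ | q.2 ∈ Set.Icc (q.1 - δ) (q.1 + δ)} :=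
    (measurableSet_le (measurable_fst.sub_const δ) measurable_snd).inter
      (measurableSet_le measurable_snd (measurable_fst.add_const δ))
  have hratio : Measurable fun q : ℝ × ℝ => min (tgt q.2 / tgt q.1) 1 := by fun_prop
  exact (hratio.indicator hwindow).const_mul _

lemma rwmhDensity_nonneg (h0 : ∀ x, 0 ≤ tgt x) (hδ : 0 ≤ δ) (x y : ℝ) :
    0 ≤ rwmhDensity tgt δ x y :=
  mul_nonneg (by positivity) <|
    Set.indicator_nonneg (fun _ _ => le_min (div_nonneg (h0 _) (h0 _)) zero_le_one) y

lemma rwmhR_eq_one_sub_integral (tgt : ℝ → ℝ) (hδ : 0 ≤ δ) (x : ℝ) :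
    rwmhR tgt δ x = 1 - ∫ y, rwmhDensity tgt δ x y := by
  simp only [rwmhR, rwmhDensity]
  rw [integral_const_mul, integral_indicator measurableSet_Icc, integral_Icc_eq_integral_Ioc,
    intervalIntegral.integral_of_le (by linarith)]

lemma measurable_rwmhR (ht : Measurable tgt) (hδ : 0 ≤ δ) : Measurable (rwmhR tgt δ) := by
  simp only [funext (rwmhR_eq_one_sub_integral tgt hδ)]
  exact measurable_const.sub
    (measurable_uncurry_rwmhDensity ht δ).stronglyMeasurable.integral_prod_right.measurable

lemma rwmhP_eq_withDensity_add_dirac (tgt : ℝ → ℝ) (δ x : ℝ) :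
    rwmhP tgt δ x = volume.withDensity (fun y => ENNReal.ofReal (rwmhDensity tgt δ x y))
      + ENNReal.ofReal (rwmhR tgt δ x) • Measure.dirac x := rfl

lemma measurable_rwmhP (ht : Measurable tgt) (hδ : 0 ≤ δ) : Measurable (rwmhP tgt δ) := by
  refine Measure.measurable_of_measurable_coe _ fun A hA => ?_
  simp only [rwmhP_eq_withDensity_add_dirac, Measure.add_apply, withDensity_apply _ hA,
    Measure.smul_apply, Measure.dirac_apply' _ hA, smul_eq_mul]
  exact (measurable_uncurry_rwmhDensity ht δ).ennreal_ofReal.lintegral_prod_right.add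
    ((measurable_rwmhR ht hδ).ennreal_ofReal.mul (measurable_one.indicator hA))

/-- The family of measures `rwmhP` bundled as a `Kernel`. -/
noncomputable def rwmhKernel (ht : Measurable tgt) (hδ : 0 ≤ δ) : Kernel ℝ ℝ :=
  ⟨rwmhP tgt δ, measurable_rwmhP ht hδ⟩

lemma integrable_rwmhDensity (ht : Measurable tgt) (h0 : ∀ x, 0 ≤ tgt x) (δ x : ℝ) :
    Integrable (rwmhDensity tgt δ x) := by
  refine .const_mul (IntegrableOn.integrable_indicator ?_ measurableSet_Icc) _
  refine Measure.integrableOn_of_bounded (M := 1) (by simp) (by fun_prop) (.of_forall fun z => ?_)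
  rw [Real.norm_of_nonneg (le_min (div_nonneg (h0 z) (h0 x)) zero_le_one)]
  exact min_le_right _ _

lemma integral_rwmhDensity_le_one (ht : Measurable tgt) (h0 : ∀ x, 0 ≤ tgt x) (hδ : 0 < δ)
    (x : ℝ) : ∫ y, rwmhDensity tgt δ x y ≤ 1 := by
  have hproposal : ∫ y, (Set.Icc (x - δ) (x + δ)).indicator (fun _ => 1 / (2 * δ)) y = 1 := by
    rw [integral_indicator_const _ measurableSet_Icc, Real.volume_real_Icc_of_le (by linarith),
      smul_eq_mul]
    field_simp
    ring
  rw [← hproposal]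
  refine integral_mono (integrable_rwmhDensity ht h0 δ x)
    ((integrableOn_const (by simp)).integrable_indicator measurableSet_Icc) fun y => ?_
  by_cases hy : y ∈ Set.Icc (x - δ) (x + δ)
  · simpa only [rwmhDensity, Set.indicator_of_mem hy] using
      mul_le_of_le_one_right (by positivity) (min_le_right _ _)
  · simp only [rwmhDensity, Set.indicator_of_notMem hy, mul_zero, le_refl]

lemma isMarkovKernel_rwmhKernel (ht : Measurable tgt) (h0 : ∀ x, 0 ≤ tgt x) (hδ : 0 < δ) :
    IsMarkovKernel (rwmhKernel ht hδ.le) := by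
  refine ⟨fun x => ⟨?_⟩⟩
  have hnonneg := rwmhDensity_nonneg h0 hδ.le x
  change rwmhP tgt δ x Set.univ = 1
  rw [rwmhP_eq_withDensity_add_dirac, Measure.add_apply, withDensity_apply _ .univ,
    Measure.restrict_univ, Measure.smul_apply, measure_univ, smul_eq_mul, mul_one,
    ← ofReal_integral_eq_lintegral_ofReal (integrable_rwmhDensity ht h0 δ x) (.of_forall hnonneg),
    rwmhR_eq_one_sub_integral tgt hδ.le, ← ENNReal.ofReal_add (integral_nonneg hnonneg)
      (sub_nonneg.2 (integral_rwmhDensity_le_one ht h0 hδ x)), add_sub_cancel, ENNReal.ofReal_one]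

lemma mul_min_div_one_comm {a b : ℝ} (ha : 0 ≤ a) (hb : 0 ≤ b) :
    a * min (b / a) 1 = b * min (a / b) 1 := by
  have hmin : ∀ {s t : ℝ}, 0 ≤ s → 0 ≤ t → s * min (t / s) 1 = min s t := by
    intro s t hs ht
    rcases hs.eq_or_lt with rfl | hs
    · simp [ht]
    · rw [mul_min_of_nonneg _ _ hs.le, mul_div_cancel₀ _ hs.ne', mul_one, min_comm]
  rw [hmin ha hb, hmin hb ha, min_comm]

lemma mul_rwmhDensity_comm (h0 : ∀ x, 0 ≤ tgt x) (δ x y : ℝ) :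
    tgt x * rwmhDensity tgt δ x y = tgt y * rwmhDensity tgt δ y x := by
  have hwindow : y ∈ Set.Icc (x - δ) (x + δ) ↔ x ∈ Set.Icc (y - δ) (y + δ) := by
    simp only [← Real.closedBall_eq_Icc, mem_closedBall_comm]
  by_cases hy : y ∈ Set.Icc (x - δ) (x + δ)
  · simp only [rwmhDensity, Set.indicator_of_mem hy, Set.indicator_of_mem (hwindow.1 hy)]
    linear_combination 1 / (2 * δ) * mul_min_div_one_comm (h0 x) (h0 y)
  · simp only [rwmhDensity, Set.indicator_of_notMem hy, Set.indicator_of_notMem (mt hwindow.2 hy),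
      mul_zero]

lemma isReversible_rwmhKernel (ht : Measurable tgt) (h0 : ∀ x, 0 ≤ tgt x) (hδ : 0 ≤ δ) :
    (rwmhKernel ht hδ).IsReversible (densityMeasure tgt) :=
  isReversible_withDensity_of_detailedBalance
    (k := fun x y => ENNReal.ofReal (rwmhDensity tgt δ x y)) ht.ennreal_ofReal
    (measurable_uncurry_rwmhDensity ht δ).ennreal_ofReal
    (rwmhP_eq_withDensity_add_dirac tgt δ) fun x y => by
      rw [← ENNReal.ofReal_mul (h0 x), ← ENNReal.ofReal_mul (h0 y), mul_rwmhDensity_comm h0]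

end RandomWalkMetropolis

section UniformTarget

variable {S : Set ℝ} {δ x : ℝ}

/-- The density of the uniform distribution on a set `S` of finite positive Lebesgue measure. -/
noncomputable def uniformDensity (S : Set ℝ) : ℝ → ℝ := S.indicator fun _ => (volume.real S)⁻¹

lemma measurable_uniformDensity (hS : MeasurableSet S) : Measurable (uniformDensity S) :=
  measurable_const.indicator hS

lemma uniformDensity_nonneg (S : Set ℝ) (y : ℝ) : 0 ≤ uniformDensity S y :=
  Set.indicator_nonneg (fun _ _ => inv_nonneg.2 measureReal_nonneg) y

lemma withDensity_ofReal_indicator_const {X : Type*} [MeasurableSpace X] (μ : Measure X)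
    {A : Set X} (hA : MeasurableSet A) (c : ℝ) :
    μ.withDensity (fun y => ENNReal.ofReal (A.indicator (fun _ => c) y))
      = ENNReal.ofReal c • μ.restrict A := by
  have hcomp : (fun y => ENNReal.ofReal (A.indicator (fun _ => c) y))
      = A.indicator fun _ => ENNReal.ofReal c :=
    Set.comp_indicator_const c ENNReal.ofReal ENNReal.ofReal_zero
  rw [hcomp, withDensity_indicator hA, withDensity_const]

lemma densityMeasure_uniformDensity (hS : MeasurableSet S) :
    densityMeasure (uniformDensity S)
      = ENNReal.ofReal (volume.real S)⁻¹ • volume.restrict S :=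
  withDensity_ofReal_indicator_const volume hS _

lemma isProbabilityMeasure_densityMeasure_uniformDensity (hS : MeasurableSet S)
    (hS0 : volume S ≠ 0) (hStop : volume S ≠ ∞) :
    IsProbabilityMeasure (densityMeasure (uniformDensity S)) := by
  have hpos : 0 < volume.real S := ENNReal.toReal_pos hS0 hStop
  constructor
  rw [densityMeasure_uniformDensity hS, Measure.smul_apply, Measure.restrict_apply_univ,
    smul_eq_mul, ENNReal.ofReal_inv_of_pos hpos, ofReal_measureReal hStop,
    ENNReal.inv_mul_cancel hS0 hStop]

lemma rwmhDensity_uniformDensity (hS0 : volume S ≠ 0) (hStop : volume S ≠ ∞) (hx : x ∈ S)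
    (δ : ℝ) :
    rwmhDensity (uniformDensity S) δ x = (closedBall x δ ∩ S).indicator fun _ => 1 / (2 * δ) := by
  have hvol : volume.real S ≠ 0 := ENNReal.toReal_ne_zero.2 ⟨hS0, hStop⟩
  ext y
  rw [rwmhDensity, ← Real.closedBall_eq_Icc]
  by_cases hball : y ∈ closedBall x δ <;> by_cases hy : y ∈ S <;>
    simp [uniformDensity, hball, hy, hx, hvol]

lemma rwmhP_uniformDensity (hS : MeasurableSet S) (hS0 : volume S ≠ 0) (hStop : volume S ≠ ∞)
    (hδ : 0 ≤ δ) (hx : x ∈ S) :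
    rwmhP (uniformDensity S) δ x
      = ENNReal.ofReal (1 / (2 * δ)) • volume.restrict (closedBall x δ ∩ S)
        + ENNReal.ofReal (1 - volume.real (closedBall x δ ∩ S) / (2 * δ)) • Measure.dirac x := by
  have haccept : MeasurableSet (closedBall x δ ∩ S) := measurableSet_closedBall.inter hS
  rw [rwmhP_eq_withDensity_add_dirac, rwmhR_eq_one_sub_integral _ hδ,
    rwmhDensity_uniformDensity hS0 hStop hx, withDensity_ofReal_indicator_const _ haccept,
    integral_indicator_const _ haccept, smul_eq_mul, mul_one_div]

lemma measureReal_closedBall_inter_div_le_one (S : Set ℝ) (hδ : 0 < δ) (x : ℝ) :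
    volume.real (closedBall x δ ∩ S) / (2 * δ) ≤ 1 := by
  rw [div_le_one (by positivity), ← Real.volume_real_closedBall hδ.le (a := x)]
  exact measureReal_mono Set.inter_subset_left measure_closedBall_lt_top.ne

lemma rwmhP_uniformDensity_of_subset_closedBall (hS : MeasurableSet S) (hS0 : volume S ≠ 0)
    (hδ : 0 ≤ δ) (hx : x ∈ S) (hsub : S ⊆ closedBall x δ) :
    rwmhP (uniformDensity S) δ x
      = ENNReal.ofReal (volume.real S / (2 * δ)) • densityMeasure (uniformDensity S)
        + ENNReal.ofReal (1 - volume.real S / (2 * δ)) • Measure.dirac x := by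
  have hStop : volume S ≠ ∞ := measure_ne_top_of_subset hsub measure_closedBall_lt_top.ne
  have hvol : volume.real S ≠ 0 := ENNReal.toReal_ne_zero.2 ⟨hS0, hStop⟩
  have hweight : 1 / (2 * δ) = volume.real S / (2 * δ) * (volume.real S)⁻¹ := by field_simp
  rw [rwmhP_uniformDensity hS hS0 hStop hδ hx, Set.inter_eq_right.2 hsub,
    densityMeasure_uniformDensity hS, smul_smul, ← ENNReal.ofReal_mul (by positivity), hweight]

theorem tvDist_kiter_rwmhP_uniformDensity_le (hS : MeasurableSet S) (hS0 : volume S ≠ 0)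
    (hδ : 0 < δ) (hx : x ∈ S) (hsub : S ⊆ closedBall x δ) (n : ℕ) :
    tvDist (kiter (rwmhP (uniformDensity S) δ) n x) (densityMeasure (uniformDensity S))
      ≤ (1 - volume.real S / (2 * δ)) ^ n := by
  have hStop : volume S ≠ ∞ := measure_ne_top_of_subset hsub measure_closedBall_lt_top.ne
  have haccept : volume.real S / (2 * δ) ≤ 1 :=
    Set.inter_eq_right.2 hsub ▸ measureReal_closedBall_inter_div_le_one S hδ x
  have hm := measurable_uniformDensity hS
  have h0 := uniformDensity_nonneg S
  have := isMarkovKernel_rwmhKernel hm h0 hδ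
  have := isProbabilityMeasure_densityMeasure_uniformDensity hS hS0 hStop
  have hinvariant : (rwmhKernel hm hδ.le).Invariant (densityMeasure (uniformDensity S)) :=
    (isReversible_rwmhKernel hm h0 hδ.le).invariant
  have hweights : (volume.real S / (2 * δ)).toNNReal + (1 - volume.real S / (2 * δ)).toNNReal
      = 1 := by
    rw [← Real.toNNReal_add (by positivity) (by linarith), add_sub_cancel, Real.toNNReal_one]
  calc tvDist (kiter (rwmhP (uniformDensity S) δ) n x) (densityMeasure (uniformDensity S))
      = tvDist ((rwmhKernel hm hδ.le ^ n) x) (densityMeasure (uniformDensity S)) :=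
        congrArg (tvDist · _) (kiter_eq_kernel_pow_apply (rwmhKernel hm hδ.le) n x)
    _ ≤ (1 - volume.real S / (2 * δ)).toNNReal ^ n :=
        tvDist_kernel_pow_apply_le hinvariant hweights
          (rwmhP_uniformDensity_of_subset_closedBall hS hS0 hδ.le hx hsub) n
    _ = (1 - volume.real S / (2 * δ)) ^ n := by rw [Real.coe_toNNReal _ (by linarith)]

theorem pow_le_tvDist_kiter_rwmhP_uniformDensity (hS : MeasurableSet S) (hS0 : volume S ≠ 0)
    (hStop : volume S ≠ ∞) (hδ : 0 < δ) (hx : x ∈ S) (n : ℕ) :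
    (1 - volume.real (closedBall x δ ∩ S) / (2 * δ)) ^ n
      ≤ tvDist (kiter (rwmhP (uniformDensity S) δ) n x) (densityMeasure (uniformDensity S)) := by
  have hm := measurable_uniformDensity hS
  have := isMarkovKernel_rwmhKernel hm (uniformDensity_nonneg S) hδ
  have := isProbabilityMeasure_densityMeasure_uniformDensity hS hS0 hStop
  have : NullSingletonClass (densityMeasure (uniformDensity S)) := nullSingletonClass_withDensity _
  have hatom : (rwmhKernel hm hδ.le x).real {x}
      = 1 - volume.real (closedBall x δ ∩ S) / (2 * δ) := by
    change (rwmhP (uniformDensity S) δ x).real {x} = _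
    rw [rwmhP_uniformDensity hS hS0 hStop hδ.le hx, measureReal_def]
    simp [measureReal_closedBall_inter_div_le_one S hδ x]
  calc (1 - volume.real (closedBall x δ ∩ S) / (2 * δ)) ^ n
      = (rwmhKernel hm hδ.le x).real {x} ^ n := by rw [hatom]
    _ ≤ tvDist ((rwmhKernel hm hδ.le ^ n) x) (densityMeasure (uniformDensity S)) :=
        singleton_pow_le_tvDist_kernel_pow_apply x n
    _ = tvDist (kiter (rwmhP (uniformDensity S) δ) n x) (densityMeasure (uniformDensity S)) :=
        congrArg (tvDist · _) (kiter_eq_kernel_pow_apply (rwmhKernel hm hδ.le) n x).symm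

lemma measureReal_closedBall_inter_closedBall_le {x y r s : ℝ} (h : |x - y| ≤ r + s) :
    volume.real (closedBall x r ∩ closedBall y s) ≤ r + s - |x - y| := by
  rw [Real.closedBall_eq_Icc, Real.closedBall_eq_Icc, Set.Icc_inter_Icc, Real.volume_real_Icc]
  refine max_le ?_ (sub_nonneg.2 h)
  rcases abs_cases (x - y) with ⟨habs, -⟩ | ⟨habs, -⟩ <;> grind

lemma unifTgt_eq_uniformDensity : unifTgt = uniformDensity (closedBall 0 1) := by
  rw [unifTgt, uniformDensity, Real.volume_real_closedBall zero_le_one, Real.closedBall_eq_Icc]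
  norm_num

end UniformTarget

theorem rwmh_uniform_different_rates_general (m : ℝ) {h δ : ℝ} (hh : 0 < h) (hδ : 0 < δ) :
    (∀ x₀ ∈ closedBall m h, |x₀ - m| ≤ δ - h → ∀ n : ℕ,
      tvDist (kiter (rwmhP (uniformDensity (closedBall m h)) δ) n x₀)
        (densityMeasure (uniformDensity (closedBall m h))) ≤ (1 - h / δ) ^ n)
    ∧ (∀ y₀ ∈ closedBall m h, h - δ ≤ |y₀ - m| → ∀ n : ℕ,
      ((δ - h + |y₀ - m|) / (2 * δ)) ^ n ≤
        tvDist (kiter (rwmhP (uniformDensity (closedBall m h)) δ) n y₀)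
          (densityMeasure (uniformDensity (closedBall m h)))) := by
  have hS0 : volume (closedBall m h) ≠ 0 := (measure_closedBall_pos _ _ hh).ne'
  refine ⟨fun x hx hxδ n => ?_, fun y hy hyδ n => ?_⟩
  · have hcover : closedBall m h ⊆ closedBall x δ :=
      closedBall_subset_closedBall' (by rw [dist_comm, Real.dist_eq]; linarith)
    have hbound := tvDist_kiter_rwmhP_uniformDensity_le measurableSet_closedBall hS0 hδ hx hcover n
    rwa [Real.volume_real_closedBall hh.le, mul_div_mul_left _ _ two_ne_zero] at hbound
  · refine le_trans (pow_le_pow_left₀ (div_nonneg (by linarith) (by positivity)) ?_ n)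
      (pow_le_tvDist_kiter_rwmhP_uniformDensity measurableSet_closedBall hS0
        measure_closedBall_lt_top.ne hδ hy n)
    have hoverlap : volume.real (closedBall y δ ∩ closedBall m h) ≤ δ + h - |y - m| :=
      measureReal_closedBall_inter_closedBall_le <| by
        linarith [mem_closedBall.1 hy, Real.dist_eq y m]
    rw [div_le_iff₀ (by positivity), sub_mul, div_mul_cancel₀ _ (by positivity)]
    linarith

/-- for the RWMH chain with target `Uniform[−1,1]` and proposal
`Uniform[x−δ, x+δ]`, `1 ≤ δ < 2`:
(1) every `x₀ ∈ [1−δ, δ−1]` satisfies `‖Pⁿ(x₀,·) − π‖_TV ≤ (1 − 1/δ)ⁿ`;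
(2) every `y₀ ∈ [−1,1]` with `|y₀| > δ−1` satisfies
`‖Pⁿ(y₀,·) − π‖_TV ≥ ((δ − 1 + |y₀|)/(2δ))ⁿ`. -/
theorem rwmh_uniform_different_rates (δ : ℝ) (hδ₁ : 1 ≤ δ) (hδ₂ : δ < 2) :
    (∀ x₀ : ℝ, x₀ ∈ Set.Icc (1 - δ) (δ - 1) → ∀ n : ℕ, 1 ≤ n →
      tvDist (kiter (rwmhP unifTgt δ) n x₀) (densityMeasure unifTgt) ≤ (1 - 1 / δ) ^ n)
    ∧ (∀ y₀ : ℝ, y₀ ∈ Set.Icc (-1 : ℝ) 1 → δ - 1 < |y₀| → ∀ n : ℕ, 1 ≤ n →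
      ((δ - 1 + |y₀|) / (2 * δ)) ^ n ≤
        tvDist (kiter (rwmhP unifTgt δ) n y₀) (densityMeasure unifTgt)) := by
  have hrates := rwmh_uniform_different_rates_general 0 one_pos (one_pos.trans_le hδ₁)
  simp only [← unifTgt_eq_uniformDensity, sub_zero] at hrates
  have hball : closedBall (0 : ℝ) 1 = Set.Icc (-1) 1 := by simp [Real.closedBall_eq_Icc]
  refine ⟨fun x hx n _ => hrates.1 x (hball ▸ ?_) (abs_le.2 ⟨?_, hx.2⟩) n,
    fun y hy _ n _ => hrates.2 y (hball ▸ hy) ?_ n⟩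
  · exact ⟨by linarith [hx.1], by linarith [hx.2]⟩
  · linarith [hx.1]
  · linarith [abs_nonneg y]
end

section
/- For the IMH chain on the finite state space X = {1, …, m}, the t-step distribution started from state 1 satisfies, for every t ≥ 1, P^t(1, ·) = (1 − 1/w₁)^t · δ₁ + (1 − (1 − 1/w₁)^t) · π, where δ₁ is the point mass at state 1; consequently ‖P^t(1,·) − π‖_TV = (1 − π₁)·(1 − 1/w₁)^t. -/
/-- The IMH transition matrix on a finite state space, for target pmf `tgt` and proposal
pmf `prp`: `P(i,j) = p_j·min(1, w_j/w_i)` for `j ≠ i` and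
`P(i,i) = p_i + Σ_k p_k·max(0, 1 − w_k/w_i)`, where `w_i = π_i/p_i`. -/
noncomputable def imhMatrix {n : ℕ} (tgt prp : Fin n → ℝ) : Matrix (Fin n) (Fin n) ℝ :=
  Matrix.of fun i j =>
    if j = i then prp i + ∑ k, prp k * max 0 (1 - (tgt k / prp k) / (tgt i / prp i))
    else prp j * min 1 ((tgt j / prp j) / (tgt i / prp i))

/-- Total variation distance between two pmfs on a finite state space. -/
noncomputable def tvFin {n : ℕ} (μ ν : Fin n → ℝ) : ℝ := (1 / 2) * ∑ j, |μ j - ν j|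

/-!
From a state `i` of maximal weight every proposal `k` is accepted with probability `w_k / w_i`, so
`p_k · (w_k / w_i) = π_k / w_i` and the row of `i` is the mixture `(1 - 1/w_i) δ_i + (1/w_i) π`.
Since `π` is stationary, each further step moves a fraction `1/w_i` of the mass still on `δ_i`
to `π` and leaves the rest of the distribution unchanged.
-/

open scoped Matrix

section FiniteChain

variable {ι R : Type*} [Fintype ι]

theorem vecMul_eq_self_of_detailed_balance [NonAssocSemiring R] {P : Matrix ι ι R} {ν : ι → R}
    (hrev : ∀ i j, ν i * P i j = ν j * P j i) (hrow : ∀ i, ∑ j, P i j = 1) : ν ᵥ* P = ν := by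
  ext j
  calc ∑ i, ν i * P i j = ∑ i, ν j * P j i := Finset.sum_congr rfl fun i _ => hrev i j
    _ = ν j := by rw [← Finset.mul_sum, hrow, mul_one]

theorem pow_row_eq_of_row_eq_mixture [DecidableEq ι] [Ring R] {P : Matrix ι ι R} {ν : ι → R}
    {i : ι} {c : R} (hstat : ν ᵥ* P = ν) (hrow : P i = (1 - c) • Pi.single i 1 + c • ν) (t : ℕ) :
    (P ^ t) i = (1 - c) ^ t • Pi.single i 1 + (1 - (1 - c) ^ t) • ν := by
  induction t with
  | zero => ext j; simp [Matrix.one_apply, Pi.single_apply, eq_comm]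
  | succ t ih =>
    calc (P ^ (t + 1)) i = (P ^ t) i ᵥ* P := by rw [pow_succ, Matrix.mul_apply_eq_vecMul]
      _ = (1 - c) ^ t • ((1 - c) • Pi.single i 1 + c • ν) + (1 - (1 - c) ^ t) • ν := by
        rw [ih, Matrix.add_vecMul, Matrix.smul_vecMul, Matrix.smul_vecMul, hstat,
          Matrix.single_one_vecMul, Matrix.row, hrow]
      _ = (1 - c) ^ (t + 1) • Pi.single i 1 + (1 - (1 - c) ^ (t + 1)) • ν := by
        rw [smul_add, smul_smul, smul_smul, ← pow_succ, add_assoc, ← add_smul]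
        congr 2
        rw [pow_succ]
        noncomm_ring

end FiniteChain

section TotalVariation

variable {n : ℕ}

theorem tvFin_mixture_right (a : ℝ) (μ ν : Fin n → ℝ) :
    tvFin (a • μ + (1 - a) • ν) ν = |a| * tvFin μ ν := by
  have hdiff (j : Fin n) : (a • μ + (1 - a) • ν) j - ν j = a * (μ j - ν j) := by
    simp only [Pi.add_apply, Pi.smul_apply, smul_eq_mul]
    ring
  simp only [tvFin, hdiff, abs_mul, ← Finset.mul_sum]
  ring

theorem tvFin_single {ν : Fin n → ℝ} (hν : ∀ j, 0 ≤ ν j) (hsum : ∑ j, ν j = 1) (i : Fin n) :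
    tvFin (Pi.single i 1) ν = 1 - ν i := by
  have hrest : ν i + ∑ j ∈ {i}ᶜ, ν j = 1 := by rw [← Fintype.sum_eq_add_sum_compl, hsum]
  have hle : ν i ≤ 1 := by linarith [Finset.sum_nonneg fun j (_ : j ∈ ({i}ᶜ : Finset _)) => hν j]
  have hoff : ∑ j ∈ {i}ᶜ, |(Pi.single i 1 : Fin n → ℝ) j - ν j| = ∑ j ∈ {i}ᶜ, ν j :=
    Finset.sum_congr rfl fun j hj => by
      rw [Pi.single_eq_of_ne (by simpa using hj), zero_sub, abs_neg, abs_of_nonneg (hν j)]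
  rw [tvFin, Fintype.sum_eq_add_sum_compl i, hoff, Pi.single_eq_same,
    abs_of_nonneg (sub_nonneg.2 hle)]
  linarith

end TotalVariation

section IndependentMetropolisHastings

variable {n : ℕ} {tgt prp : Fin n → ℝ} {i : Fin n}

/-- The probability that the IMH chain at state `i` rejects its proposal. -/
noncomputable def imhRejectionProb (tgt prp : Fin n → ℝ) (i : Fin n) : ℝ :=
  ∑ k, prp k * max 0 (1 - (tgt k / prp k) / (tgt i / prp i))

theorem imhRejectionProb_nonneg (hprp : ∀ k, 0 ≤ prp k) : 0 ≤ imhRejectionProb tgt prp i :=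
  Finset.sum_nonneg fun k _ => mul_nonneg (hprp k) (le_max_left _ _)

theorem imhMatrix_apply_of_ne {j : Fin n} (hij : i ≠ j) :
    imhMatrix tgt prp i j = prp j * min 1 ((tgt j / prp j) / (tgt i / prp i)) :=
  if_neg hij.symm

theorem imhMatrix_row_eq_accept_add_reject (hw : tgt i / prp i ≠ 0) :
    imhMatrix tgt prp i = (fun j => prp j * min 1 ((tgt j / prp j) / (tgt i / prp i)))
      + imhRejectionProb tgt prp i • Pi.single i 1 := by
  ext j
  obtain rfl | hij := eq_or_ne i j
  · simp [imhMatrix, imhRejectionProb, div_self hw]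
  · simp [imhMatrix_apply_of_ne hij, hij.symm]

theorem sum_imhMatrix_row (hw : tgt i / prp i ≠ 0) :
    ∑ j, imhMatrix tgt prp i j = ∑ j, prp j := by
  have haccept_add_reject (x : ℝ) : min 1 x + max 0 (1 - x) = 1 := by grind
  simp only [imhMatrix_row_eq_accept_add_reject hw, Pi.add_apply, Pi.smul_apply, smul_eq_mul,
    Finset.sum_add_distrib, ← Finset.mul_sum, Fintype.sum_pi_single', mul_one]
  simp only [imhRejectionProb, ← Finset.sum_add_distrib, ← mul_add, haccept_add_reject, mul_one]

theorem imhMatrix_detailed_balance (htgt : ∀ k, 0 < tgt k) (hprp : ∀ k, 0 < prp k) (i j : Fin n) :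
    tgt i * imhMatrix tgt prp i j = tgt j * imhMatrix tgt prp j i := by
  have hflow (a b : Fin n) : tgt a * (prp b * min 1 ((tgt b / prp b) / (tgt a / prp a)))
      = min (tgt a * prp b) (tgt b * prp a) := by
    have ha := (htgt a).ne'
    have hb := (hprp b).ne'
    rw [← mul_assoc, mul_min_of_nonneg _ _ (mul_pos (htgt a) (hprp b)).le, mul_one]
    congr 1
    field_simp
  obtain rfl | hij := eq_or_ne i j
  · rfl
  · rw [imhMatrix_apply_of_ne hij, imhMatrix_apply_of_ne hij.symm, hflow, hflow, min_comm]

theorem vecMul_imhMatrix (htgt : ∀ k, 0 < tgt k) (hprp : ∀ k, 0 < prp k)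
    (hprp_sum : ∑ k, prp k = 1) : tgt ᵥ* imhMatrix tgt prp = tgt :=
  vecMul_eq_self_of_detailed_balance (imhMatrix_detailed_balance htgt hprp) fun i =>
    (sum_imhMatrix_row (div_pos (htgt i) (hprp i)).ne').trans hprp_sum

theorem prp_mul_weight_ratio {k : Fin n} (hk : prp k ≠ 0) :
    prp k * ((tgt k / prp k) / (tgt i / prp i)) = 1 / (tgt i / prp i) * tgt k := by
  field_simp

theorem imhRejectionProb_of_forall_weight_le (hprp : ∀ k, prp k ≠ 0)
    (htgt_sum : ∑ k, tgt k = 1) (hprp_sum : ∑ k, prp k = 1) (hw : 0 < tgt i / prp i)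
    (hmax : ∀ k, tgt k / prp k ≤ tgt i / prp i) :
    imhRejectionProb tgt prp i = 1 - 1 / (tgt i / prp i) := by
  have hterm (k : Fin n) : prp k * max 0 (1 - (tgt k / prp k) / (tgt i / prp i))
      = prp k - 1 / (tgt i / prp i) * tgt k := by
    rw [max_eq_right (sub_nonneg.2 ((div_le_one hw).2 (hmax k))), mul_sub, mul_one,
      prp_mul_weight_ratio (hprp k)]
  simp only [imhRejectionProb, hterm, Finset.sum_sub_distrib, ← Finset.mul_sum, htgt_sum,
    hprp_sum, mul_one]

theorem imhMatrix_row_of_forall_weight_le (hprp : ∀ k, prp k ≠ 0)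
    (htgt_sum : ∑ k, tgt k = 1) (hprp_sum : ∑ k, prp k = 1) (hw : 0 < tgt i / prp i)
    (hmax : ∀ k, tgt k / prp k ≤ tgt i / prp i) :
    imhMatrix tgt prp i =
      (1 - 1 / (tgt i / prp i)) • Pi.single i 1 + (1 / (tgt i / prp i)) • tgt := by
  rw [imhMatrix_row_eq_accept_add_reject hw.ne',
    imhRejectionProb_of_forall_weight_le hprp htgt_sum hprp_sum hw hmax, add_comm]
  congr 1
  ext j
  rw [min_eq_right ((div_le_one hw).2 (hmax j)), prp_mul_weight_ratio (hprp j), Pi.smul_apply,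
    smul_eq_mul]

end IndependentMetropolisHastings

theorem imh_finite_start_at_max_general {n : ℕ} {tgt prp : Fin n → ℝ} {i : Fin n}
    (htgt_pos : ∀ k, 0 < tgt k) (hprp_pos : ∀ k, 0 < prp k)
    (htgt_sum : ∑ k, tgt k = 1) (hprp_sum : ∑ k, prp k = 1)
    (hmax : ∀ k, tgt k / prp k ≤ tgt i / prp i) (t : ℕ) :
    (imhMatrix tgt prp ^ t) i = (1 - 1 / (tgt i / prp i)) ^ t • Pi.single i 1
        + (1 - (1 - 1 / (tgt i / prp i)) ^ t) • tgt
      ∧ tvFin ((imhMatrix tgt prp ^ t) i) tgt =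
          (1 - tgt i) * (1 - 1 / (tgt i / prp i)) ^ t := by
  have hw : 0 < tgt i / prp i := div_pos (htgt_pos i) (hprp_pos i)
  have hprp_ne (k : Fin n) : prp k ≠ 0 := (hprp_pos k).ne'
  have hpow := pow_row_eq_of_row_eq_mixture (vecMul_imhMatrix htgt_pos hprp_pos hprp_sum)
    (imhMatrix_row_of_forall_weight_le hprp_ne htgt_sum hprp_sum hw hmax) t
  have hrate : 0 ≤ 1 - 1 / (tgt i / prp i) := by
    rw [← imhRejectionProb_of_forall_weight_le hprp_ne htgt_sum hprp_sum hw hmax]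
    exact imhRejectionProb_nonneg fun k => (hprp_pos k).le
  refine ⟨hpow, ?_⟩
  rw [hpow, tvFin_mixture_right, tvFin_single (fun k => (htgt_pos k).le) htgt_sum,
    abs_of_nonneg (pow_nonneg hrate t), mul_comm]

/-- for the IMH chain on `{1, …, m}` (here `Fin (m+2)`, state `1` being
index `0`), `Pᵗ(1,·) = (1 − 1/w₁)ᵗ·δ₁ + (1 − (1 − 1/w₁)ᵗ)·π`, and consequently
`‖Pᵗ(1,·) − π‖_TV = (1 − π₁)(1 − 1/w₁)ᵗ`, for every `t ≥ 1`. -/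
theorem imh_finite_start_at_max (m : ℕ) (tgt prp : Fin (m + 2) → ℝ)
    (htgt_pos : ∀ i, 0 < tgt i) (hprp_pos : ∀ i, 0 < prp i)
    (htgt_sum : ∑ i, tgt i = 1) (hprp_sum : ∑ i, prp i = 1)
    (hmono : ∀ i j : Fin (m + 2), i ≤ j → tgt j / prp j ≤ tgt i / prp i) :
    ∀ t : ℕ, 1 ≤ t →
      ((imhMatrix tgt prp ^ t) 0 = fun j =>
          (1 - 1 / (tgt 0 / prp 0)) ^ t * (if j = 0 then 1 else 0)
            + (1 - (1 - 1 / (tgt 0 / prp 0)) ^ t) * tgt j)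
        ∧ tvFin ((imhMatrix tgt prp ^ t) 0) tgt =
            (1 - tgt 0) * (1 - 1 / (tgt 0 / prp 0)) ^ t := by
  intro t _
  simpa only [funext_iff, Pi.add_apply, Pi.smul_apply, smul_eq_mul, Pi.single_apply] using
    imh_finite_start_at_max_general htgt_pos hprp_pos htgt_sum hprp_sum
      (fun k => hmono 0 k (Fin.zero_le k)) t
end
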